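/- arXiv:2506.20568 — 2 statements merged into one kernel-verified Lean document; each statement's English description precedes it below -/
import Mathlib

section
/- The semistable cone of d equals {θ in the orthogonal complement of d : θ(e) ≤ 0 for all generic subdimension vectors e of d}. -/
open scoped BigOperators

/-- A representation of a quiver with vertex set `Q0` and arrow set `Q1`
(with source and target maps `s t : Q1 → Q0`) over a field `k`:
a finite-dimensional `k`-vector space at each vertex and a linear map for each arrow. -/
structure QRep (k : Type) [Field k] {Q0 Q1 : Type} (s t : Q1 → Q0) where
  V : Q0 → Type
  [addgrp : ∀ i, AddCommGroup (V i)]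
  [mod : ∀ i, Module k (V i)]
  [fd : ∀ i, FiniteDimensional k (V i)]
  hom : ∀ a : Q1, V (s a) →ₗ[k] V (t a)

attribute [instance] QRep.addgrp QRep.mod QRep.fd

namespace QRep

variable {k : Type} [Field k] {Q0 Q1 : Type} {s t : Q1 → Q0}

/-- The dimension vector of a representation. -/
noncomputable def dimVec (M : QRep k s t) : Q0 → ℕ := fun i => Module.finrank k (M.V i)

/-- A family of subspaces is a subrepresentation if it is invariant under all arrow maps. -/
def IsSubrep (M : QRep k s t) (U : ∀ i, Submodule k (M.V i)) : Prop :=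
  ∀ a : Q1, ∀ x ∈ U (s a), M.hom a x ∈ U (t a)

/-- The dimension vector of a family of subspaces. -/
noncomputable def subDim (M : QRep k s t) (U : ∀ i, Submodule k (M.V i)) : Q0 → ℕ :=
  fun i => Module.finrank k (U i)

/-- The subrepresentation determined by an invariant family of subspaces. -/
def subRep (M : QRep k s t) (U : ∀ i, Submodule k (M.V i)) (h : M.IsSubrep U) :
    QRep k s t where
  V := fun i => U i
  hom := fun a => (M.hom a).restrict (fun x hx => h a x hx)

/-- The quotient representation by an invariant family of subspaces. -/
def quotRep (M : QRep k s t) (U : ∀ i, Submodule k (M.V i)) (h : M.IsSubrep U) :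
    QRep k s t where
  V := fun i => M.V i ⧸ U i
  hom := fun a => (U (s a)).mapQ (U (t a)) (M.hom a) (fun x hx => h a x hx)

/-- Direct sum of two representations. -/
def dsum (M N : QRep k s t) : QRep k s t where
  V := fun i => M.V i × N.V i
  hom := fun a => (M.hom a).prodMap (N.hom a)

variable [Fintype Q0]

/-- The pairing `θ(d) = θ · d` of a stability parameter with a dimension vector. -/
def pair (θ : Q0 → ℝ) (d : Q0 → ℕ) : ℝ := ∑ i, θ i * (d i : ℝ)

/-- `θ`-semistability: `θ(M) = 0` and `θ(M') ≤ 0` for all subrepresentations. -/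
def Semistable (θ : Q0 → ℝ) (M : QRep k s t) : Prop :=
  pair θ M.dimVec = 0 ∧
    ∀ U : ∀ i, Submodule k (M.V i), M.IsSubrep U → pair θ (M.subDim U) ≤ 0

/-- `θ`-stability: `θ(M) = 0` and `θ(M') < 0` for all proper nonzero subrepresentations. -/
def Stable (θ : Q0 → ℝ) (M : QRep k s t) : Prop :=
  pair θ M.dimVec = 0 ∧
    ∀ U : ∀ i, Submodule k (M.V i), M.IsSubrep U →
      U ≠ (fun _ => ⊥) → U ≠ (fun _ => ⊤) → pair θ (M.subDim U) < 0

end QRep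

section Defs

variable (k : Type) [Field k] {Q0 Q1 : Type} (s t : Q1 → Q0)

/-- `e` is a generic subdimension vector of `d` (Schofield's characterization as definition):
every representation of dimension vector `d` admits a subrepresentation of dimension vector `e`. -/
def GenericSub (e d : Q0 → ℕ) : Prop :=
  e ≤ d ∧ ∀ M : QRep k s t, M.dimVec = d →
    ∃ U : ∀ i, Submodule k (M.V i), M.IsSubrep U ∧ M.subDim U = e

variable [Fintype Q0]

/-- The semistable cone of `d`: stability parameters orthogonal to `d` admitting a
semistable representation of dimension vector `d`. -/
def SstCone (d : Q0 → ℕ) : Set (Q0 → ℝ) :=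
  {θ | QRep.pair θ d = 0 ∧ ∃ M : QRep k s t, M.dimVec = d ∧ QRep.Semistable θ M}

/-- The wall `W_e`: parameters `θ` orthogonal to `d` and `e` such that some `θ`-semistable
representation of dimension vector `d` has a subrepresentation of dimension vector `e`. -/
def Wall (d e : Q0 → ℕ) : Set (Q0 → ℝ) :=
  {θ | QRep.pair θ d = 0 ∧ QRep.pair θ e = 0 ∧
    ∃ (M : QRep k s t) (U : ∀ i, Submodule k (M.V i)),
      M.dimVec = d ∧ M.IsSubrep U ∧ M.subDim U = e ∧ QRep.Semistable θ M}

/-- GIT equivalence of stability parameters: equal semistable loci. -/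
def GITEquiv (d : Q0 → ℕ) (θ η : Q0 → ℝ) : Prop :=
  ∀ M : QRep k s t, M.dimVec = d → (QRep.Semistable θ M ↔ QRep.Semistable η M)

end Defs

/-- The hyperplane `H_e` inside the stability space of `d`. -/
def Hset {Q0 : Type} [Fintype Q0] (d e : Q0 → ℕ) : Set (Q0 → ℝ) :=
  {θ | QRep.pair θ d = 0 ∧ QRep.pair θ e = 0}

section Euler

variable {Q0 Q1 : Type} [Fintype Q0] [Fintype Q1]

/-- The Euler form of the quiver. -/
def euler (s t : Q1 → Q0) (x y : Q0 → ℤ) : ℤ :=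
  (∑ i, x i * y i) - ∑ a, x (s a) * y (t a)

/-- `ext(d, e)`: the maximum of `−⟨d', e⟩` over generic subdimension vectors `d' ↪ d`. -/
noncomputable def extGen (k : Type) [Field k] (s t : Q1 → Q0) (d e : Q0 → ℕ) : ℤ :=
  sSup {z : ℤ | ∃ d' : Q0 → ℕ, GenericSub k s t d' d ∧
    z = -(euler s t (fun i => (d' i : ℤ)) (fun i => (e i : ℤ)))}

end Euler

section Schur

variable {Q0 Q1 : Type} (s t : Q1 → Q0)

/-- Coordinates on the representation space `Rep(Q, d)`. -/
def RepCoords (d : Q0 → ℕ) : Type := Σ a : Q1, Fin (d (t a)) × Fin (d (s a))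

/-- The representation associated to a point of the representation space. -/
def matToRep (k : Type) [Field k] (d : Q0 → ℕ)
    (m : ∀ a : Q1, Matrix (Fin (d (t a))) (Fin (d (s a))) k) : QRep k s t where
  V := fun i => Fin (d i) → k
  hom := fun a => Matrix.mulVecLin (m a)

/-- A nonzero representation is indecomposable if it is not a direct sum of two nonzero
subrepresentations. -/
def Indecomposable (k : Type) [Field k] (M : QRep k s t) : Prop :=
  (∃ i, Module.finrank k (M.V i) ≠ 0) ∧
    ¬ ∃ U W : ∀ i, Submodule k (M.V i), M.IsSubrep U ∧ M.IsSubrep W ∧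
        U ≠ (fun _ => ⊥) ∧ W ≠ (fun _ => ⊥) ∧ ∀ i, IsCompl (U i) (W i)

/-- `d` is a Schur root: a general representation of dimension vector `d` is indecomposable,
i.e. all representations outside the vanishing locus of some nonzero polynomial on the
representation space are indecomposable. -/
def IsSchurRoot (k : Type) [Field k] (d : Q0 → ℕ) : Prop :=
  ∃ p : MvPolynomial (RepCoords s t d) k, p ≠ 0 ∧
    ∀ m : ∀ a : Q1, Matrix (Fin (d (t a))) (Fin (d (s a))) k,
      MvPolynomial.eval (fun x => m x.1 x.2.1 x.2.2) p ≠ 0 →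
        Indecomposable s t k (matToRep s t k d m)

end Schur

section Helpers

/-- `Sol e m`: over the ring `R`, the matrices `m` admit a split sub-object of rank vector `e`. -/
def Sol {R : Type} [CommRing R] {Q0 Q1 : Type} {s t : Q1 → Q0} {d : Q0 → ℕ} (e : Q0 → ℕ)
    (m : ∀ a : Q1, Matrix (Fin (d (t a))) (Fin (d (s a))) R) : Prop :=
  ∃ (B : ∀ i, Matrix (Fin (d i)) (Fin (e i)) R) (L : ∀ i, Matrix (Fin (e i)) (Fin (d i)) R)
    (C : ∀ a, Matrix (Fin (e (t a))) (Fin (e (s a))) R),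
    (∀ i, L i * B i = 1) ∧ ∀ a, m a * B (s a) = B (t a) * C a

variable {Q0 Q1 : Type} {s t : Q1 → Q0} {d e : Q0 → ℕ}

lemma Sol.map {R R' : Type} [CommRing R] [CommRing R'] (φ : R →+* R')
    {m : ∀ a : Q1, Matrix (Fin (d (t a))) (Fin (d (s a))) R} (h : Sol e m) :
    Sol e (fun a => (m a).map φ) := by
  obtain ⟨B, L, C, h1, h2⟩ := h
  refine ⟨fun i => (B i).map φ, fun i => (L i).map φ, fun a => (C a).map φ, fun i => ?_, fun a => ?_⟩
  · rw [← Matrix.map_mul, h1]; simp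
  · rw [← Matrix.map_mul, h2, Matrix.map_mul]

/-- A solution over any nontrivial `k`-algebra gives a solution over algebraically closed `k`. -/
lemma Sol.descend {k R : Type} [Field k] [IsAlgClosed k] [CommRing R] [Nontrivial R]
    [Fintype Q0] [Fintype Q1] (φ : k →+* R)
    {m : ∀ a : Q1, Matrix (Fin (d (t a))) (Fin (d (s a))) k}
    (h : Sol e (fun a => (m a).map φ)) : Sol e m := by
  letI := φ.toAlgebra
  obtain ⟨B, L, C, h1, h2⟩ := h
  let T : Set R := (Set.range fun p : (Σ i, Fin (d i) × Fin (e i)) => B p.1 p.2.1 p.2.2) ∪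
    (Set.range fun p : (Σ i, Fin (e i) × Fin (d i)) => L p.1 p.2.1 p.2.2) ∪
    (Set.range fun p : (Σ a, Fin (e (t a)) × Fin (e (s a))) => C p.1 p.2.1 p.2.2)
  have hT : T.Finite := ((Set.finite_range _).union (Set.finite_range _)).union (Set.finite_range _)
  let A : Subalgebra k R := Algebra.adjoin k T
  have hAfg : A.FG := Subalgebra.fg_def.2 ⟨T, hT, rfl⟩
  have hft : Algebra.FiniteType k A := A.fg_iff_finiteType.mp hAfg
  have hB : ∀ i r j, B i r j ∈ A := fun i r j =>
    Algebra.subset_adjoin (Or.inl (Or.inl ⟨⟨i, r, j⟩, rfl⟩))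
  have hL : ∀ i r j, L i r j ∈ A := fun i r j =>
    Algebra.subset_adjoin (Or.inl (Or.inr ⟨⟨i, r, j⟩, rfl⟩))
  have hC : ∀ a r j, C a r j ∈ A := fun i r j =>
    Algebra.subset_adjoin (Or.inr ⟨⟨i, r, j⟩, rfl⟩)
  have hSA : Sol e (fun a => (m a).map (algebraMap k A)) := by
    refine ⟨fun i => Matrix.of fun r j => ⟨B i r j, hB i r j⟩,
      fun i => Matrix.of fun r j => ⟨L i r j, hL i r j⟩,
      fun a => Matrix.of fun r j => ⟨C a r j, hC a r j⟩, fun i => ?_, fun a => ?_⟩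
    · ext r j
      have := congrFun (congrFun (h1 i) r) j
      simp only [Matrix.mul_apply, Matrix.of_apply] at this ⊢
      push_cast
      rw [this]
      by_cases h : r = j
      · subst h; simp
      · simp [h]
    · ext r j
      have := congrFun (congrFun (h2 a) r) j
      simp only [Matrix.mul_apply, Matrix.of_apply] at this ⊢
      push_cast
      exact this
  obtain ⟨P, hP⟩ := Ideal.exists_maximal A
  letI : Field (A ⧸ P) := Ideal.Quotient.field P
  have hfin : Module.Finite k (A ⧸ P) := finite_of_finite_type_of_isJacobsonRing k (A ⧸ P)
  have hbij := IsAlgClosed.algebraMap_bijective_of_isIntegral (k := k) (K := A ⧸ P)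
  let ψ : k ≃+* (A ⧸ P) := RingEquiv.ofBijective (algebraMap k (A ⧸ P)) hbij
  have := hSA.map ((ψ.symm : (A ⧸ P) →+* k).comp (Ideal.Quotient.mk P))
  convert this using 2 with a
  ext r j
  simp only [Matrix.map_apply, RingHom.comp_apply]
  symm
  change ψ.symm (ψ (m a r j)) = _
  simp

lemma exists_minor {K : Type} [Field K] {n r : ℕ} (B : Matrix (Fin n) (Fin r) K)
    (L : Matrix (Fin r) (Fin n) K) (h : L * B = 1) :
    ∃ J : Fin r → Fin n, (B.submatrix J id).det ≠ 0 := by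
  by_contra! hc
  have h1 : (L * B).det = 0 := by
    have : (L * B) = fun j => ∑ x, L j x • B x := by
      ext j c
      simp [Matrix.mul_apply, Finset.sum_apply]
    rw [this]
    change Matrix.detRowAlternating (fun j => ∑ x, L j x • B x) = 0
    rw [← AlternatingMap.coe_multilinearMap, MultilinearMap.map_sum]
    refine Finset.sum_eq_zero fun J _ => ?_
    rw [MultilinearMap.map_smul_univ]
    have := hc J
    change _ • (B.submatrix J id).det = 0
    rw [this, smul_zero]
  rw [h, Matrix.det_one] at h1
  exact one_ne_zero h1

lemma exists_chart {K : Type} [Field K] (V : ValuationSubring K) {n r : ℕ}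
    (B : Matrix (Fin n) (Fin r) K) (L : Matrix (Fin r) (Fin n) K) (h : L * B = 1) :
    ∃ (g g' : Matrix (Fin r) (Fin r) K) (B0 : Matrix (Fin n) (Fin r) V)
      (L0 : Matrix (Fin r) (Fin n) V), g * g' = 1 ∧ L0 * B0 = 1 ∧
        B0.map V.subtype = B * g := by
  obtain ⟨J0, hJ0⟩ := exists_minor B L h
  haveI : Nonempty (Fin r → Fin n) := ⟨J0⟩
  obtain ⟨J, hJ⟩ := Finite.exists_max fun J : Fin r → Fin n =>
    V.valuation (B.submatrix J id).det
  have hdet : (B.submatrix J id).det ≠ 0 := by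
    intro h0
    have := hJ J0
    rw [h0, map_zero, le_zero_iff, map_eq_zero] at this
    exact hJ0 this
  set A := B.submatrix J id with hA
  have hu : IsUnit A.det := hdet.isUnit
  have hent : ∀ x j, (B * A⁻¹) x j = (A.det)⁻¹ * (B.submatrix (Function.update J j x) id).det := by
    intro x j
    have h1 : (B.submatrix (Function.update J j x) id) = A.updateRow j (B x) := by
      ext p q
      by_cases hp : p = j
      · subst hp; simp
      · simp [hp, hA]
    rw [h1, ← Matrix.cramer_transpose_apply, Matrix.cramer_eq_adjugate_mulVec,
      Matrix.inv_def, Ring.inverse_eq_inv']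
    rw [Matrix.mul_smul, Matrix.smul_apply, smul_eq_mul, ← Matrix.adjugate_transpose,
      Matrix.mulVec_transpose]
    rfl
  have hmem : ∀ x j, (B * A⁻¹) x j ∈ V := by
    intro x j
    rw [hent, ← V.valuation_le_one_iff, map_mul, map_inv₀]
    have h2 := hJ (Function.update J j x)
    have h3 : V.valuation A.det ≠ 0 := by simpa using hdet
    calc _ ≤ (V.valuation A.det)⁻¹ * V.valuation A.det := by gcongr
      _ = 1 := inv_mul_cancel₀ h3
  refine ⟨A⁻¹, A, Matrix.of fun x j => ⟨_, hmem x j⟩,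
    Matrix.of fun j x => if J j = x then 1 else 0,
    Matrix.nonsing_inv_mul A hu, ?_, ?_⟩
  · ext p q
    have h4 : (B * A⁻¹) (J p) q = (1 : Matrix (Fin r) (Fin r) K) p q := by
      rw [← Matrix.mul_nonsing_inv A hu]
      rfl
    rw [Matrix.mul_apply]
    simp only [Matrix.of_apply, ite_mul, one_mul, zero_mul, Finset.sum_ite_eq,
      Finset.mem_univ, if_true]
    rw [h4]
    by_cases hpq : p = q
    · subst hpq; simp
    · simp [hpq]
  · ext x j
    rfl

lemma Sol.valuation {K : Type} [Field K] (V : ValuationSubring K)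
    {m : ∀ a : Q1, Matrix (Fin (d (t a))) (Fin (d (s a))) V}
    (h : Sol e (fun a => (m a).map V.subtype)) : Sol e m := by
  obtain ⟨B, L, C, h1, h2⟩ := h
  choose g g' B0 L0 hg h0 hB using fun i => exists_chart V (B i) (L i) (h1 i)
  have hinj : Function.Injective V.subtype := Subtype.val_injective
  refine ⟨B0, L0, fun a => L0 (t a) * (m a * B0 (s a)), h0, fun a => ?_⟩
  apply Matrix.map_injective hinj
  have key : (m a).map V.subtype * (B0 (s a)).map V.subtype =
      (B0 (t a)).map V.subtype * (g' (t a) * C a * g (s a)) := by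
    rw [hB, hB, ← Matrix.mul_assoc, h2]
    simp only [Matrix.mul_assoc]
    rw [← Matrix.mul_assoc (g (t a)) (g' (t a)), hg, Matrix.one_mul]
  have h0' : (L0 (t a)).map V.subtype * (B0 (t a)).map V.subtype = 1 := by
    rw [← Matrix.map_mul, h0]; simp
  simp only [Matrix.map_mul]
  rw [key, ← Matrix.mul_assoc ((L0 (t a)).map V.subtype), h0', Matrix.one_mul]

lemma exists_place {k : Type} [Field k] (S : Set k) (hS : S.Infinite) :
    ∃ (P : Ideal (S → k)) (_ : P.IsMaximal), letI := Ideal.Quotient.field P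
      ∃ (V : ValuationSubring ((S → k) ⧸ P)), (∀ c : k, Ideal.Quotient.mk P (fun _ => c) ∈ V) ∧
        Ideal.Quotient.mk P (fun x => (x : k)) ∈ V.nonunits := by
  let I : Ideal (S → k) :=
    { carrier := {f | {x | f x ≠ 0}.Finite}
      add_mem' := by
        intro f g hf hg
        refine (hf.union hg).subset fun x hx => ?_
        by_contra hc
        simp only [Set.mem_union, Set.mem_ofPred_eq, not_or, not_not] at hc
        exact hx (by simp [hc.1, hc.2])
      zero_mem' := by simp
      smul_mem' := by
        intro c f hf
        refine hf.subset fun x hx => ?_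
        intro hc
        exact hx (by simp [hc]) }
  haveI : Infinite S := hS.to_subtype
  have hI : I ≠ ⊤ := by
    intro h
    have : (1 : S → k) ∈ I := h ▸ Submodule.mem_top
    have h' : ({x : S | (1 : S → k) x ≠ 0}).Finite := this
    simp [Set.finite_univ_iff] at h'
    exact not_finite S
  obtain ⟨P, hP, hIP⟩ := Ideal.exists_le_maximal I hI
  refine ⟨P, hP, ?_⟩
  letI := Ideal.Quotient.field P
  let ξ : (S → k) ⧸ P := Ideal.Quotient.mk P (fun x => (x : k))
  have haev : ∀ q : Polynomial k, Polynomial.aeval ξ q =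
      Ideal.Quotient.mk P (fun x => q.eval (x : k)) := by
    intro q
    have : Polynomial.aeval ξ q = Ideal.Quotient.mkₐ k P
        (Polynomial.aeval (fun x : S => (x : k)) q) := by
      rw [← Polynomial.aeval_algHom_apply]; rfl
    rw [this]
    change Ideal.Quotient.mk P _ = _
    congr 1
    ext x
    have := Polynomial.aeval_algHom_apply (Pi.evalAlgHom k (fun _ : S => k) x)
      (fun x : S => (x : k)) q
    simp only [Pi.evalAlgHom_apply] at this
    rw [← this]
    simp [Polynomial.aeval_def, Polynomial.eval₂_eq_eval_map]
  have htr : ∀ q : Polynomial k, q ≠ 0 → Polynomial.aeval ξ q ≠ 0 := by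
    intro q hq h0
    rw [haev, Ideal.Quotient.eq_zero_iff_mem] at h0
    have h1 : (fun x : S => (q.eval (x : k))⁻¹) * (fun x : S => q.eval (x : k)) - 1 ∈ I := by
      have hfin : {x : k | q.IsRoot x}.Finite := Polynomial.finite_setOfPred_isRoot hq
      refine (hfin.preimage Subtype.val_injective.injOn).subset fun x hx => ?_
      by_contra hc
      apply hx
      have hc' : q.eval (x : k) ≠ 0 := hc
      simp [hc']
    have h2 := P.mul_mem_left (fun x : S => (q.eval (x : k))⁻¹) h0
    have h3 := P.sub_mem h2 (hIP h1)
    rw [sub_sub_cancel] at h3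
    exact hP.ne_top ((Ideal.eq_top_iff_one P).2 h3)
  let A : Subring ((S → k) ⧸ P) := (Polynomial.aeval (R := k) ξ).range.toSubring
  let ξA : A := ⟨ξ, ⟨Polynomial.X, by simp⟩⟩
  have hne : Ideal.span {ξA} ≠ ⊤ := by
    intro h
    have h1 : (1 : A) ∈ Ideal.span {ξA} := h ▸ Submodule.mem_top
    obtain ⟨⟨_, ⟨q, rfl⟩⟩, hq⟩ := Ideal.mem_span_singleton'.1 h1
    have hq' : Polynomial.aeval ξ q * ξ = 1 := congrArg Subtype.val hq
    refine htr (q * Polynomial.X - 1) ?_ ?_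
    · intro h0
      have := congrArg (Polynomial.eval 0) h0
      simp at this
    · simp [hq']
  obtain ⟨V, hV1, hV2⟩ := Ideal.image_subset_nonunits_valuationSubring (Ideal.span {ξA}) hne
  refine ⟨V, fun c => hV1 ⟨Polynomial.C c, ?_⟩, hV2 ⟨ξA, Ideal.subset_span rfl, rfl⟩⟩
  simp [haev]

lemma finite_bad {k : Type} [Field k] [IsAlgClosed k] [Fintype Q0] [Fintype Q1]
    (m n : ∀ a : Q1, Matrix (Fin (d (t a))) (Fin (d (s a))) k) (hm : ¬ Sol e m) :
    {x : k | Sol e (fun a => m a + x • n a)}.Finite := by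
  by_contra hS
  set S := {x : k | Sol e (fun a => m a + x • n a)} with hSdef
  apply hm
  obtain ⟨P, hP, V, hV1, hV2⟩ := exists_place S hS
  letI := Ideal.Quotient.field P
  have hprod : Sol e (R := S → k)
      (fun a : Q1 => (Matrix.of fun r j => fun x : S => m a r j + (x : k) * n a r j :
        Matrix (Fin (d (t a))) (Fin (d (s a))) (S → k))) := by
    choose B L C h1 h2 using fun x : S => x.2
    refine ⟨fun i => Matrix.of fun r j x => B x i r j, fun i => Matrix.of fun r j x => L x i r j,
      fun a => Matrix.of fun r j x => C x a r j,
      fun i => ?_, fun a => ?_⟩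
    · ext r j x
      have := congrFun (congrFun (h1 x i) r) j
      simp only [Matrix.mul_apply, Matrix.of_apply, Finset.sum_apply, Pi.mul_apply] at this ⊢
      rw [this]
      by_cases h : r = j
      · subst h; simp
      · simp [h]
    · ext r j x
      have := congrFun (congrFun (h2 x a) r) j
      simpa only [Matrix.mul_apply, Matrix.of_apply, Finset.sum_apply, Pi.mul_apply, Matrix.add_apply,
        Matrix.smul_apply, smul_eq_mul] using this
  have hK := hprod.map (Ideal.Quotient.mk P)
  have hξ : Ideal.Quotient.mk P (fun x : S => (x : k)) ∈ V := V.nonunits_le hV2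
  let ξ : V := ⟨_, hξ⟩
  let c : k →+* V := ((Ideal.Quotient.mk P).comp (Pi.constRingHom S k)).codRestrict V.toSubring hV1
  have hVs : Sol e (fun a => (m a).map c + ξ • (n a).map c) := by
    apply Sol.valuation V
    have heq : (fun a => ((m a).map c + ξ • (n a).map c).map V.subtype) =
        (fun a : Q1 => (Matrix.of fun r j => fun x : S => m a r j + (x : k) * n a r j :
          Matrix (Fin (d (t a))) (Fin (d (s a))) (S → k)).map (Ideal.Quotient.mk P)) := by
      funext a
      ext r j
      rfl
    rw [heq]
    exact hK
  have hF := hVs.map (IsLocalRing.residue V)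
  refine Sol.descend ((IsLocalRing.residue V).comp c) (m := m) ?_
  convert hF using 2 with a
  have hz : IsLocalRing.residue V ξ = 0 := by
    rw [IsLocalRing.residue_eq_zero_iff]
    exact V.mem_nonunits_iff_exists_mem_maximalIdeal.1 hV2 |>.2
  ext r j
  simp [hz]

lemma exists_good {k : Type} [Field k] [IsAlgClosed k] [CharZero k] [Fintype Q0] [Fintype Q1]
    (T : Finset (Q0 → ℕ))
    (hT : ∀ e ∈ T, ∃ m : ∀ a : Q1, Matrix (Fin (d (t a))) (Fin (d (s a))) k, ¬ Sol e m) :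
    ∃ m : ∀ a : Q1, Matrix (Fin (d (t a))) (Fin (d (s a))) k, ∀ e ∈ T, ¬ Sol e m := by
  classical
  induction T using Finset.induction_on with
  | empty => exact ⟨fun _ => 0, by simp⟩
  | insert e0 T _ ih =>
    obtain ⟨m, hm⟩ := ih fun e he => hT e (Finset.mem_insert_of_mem he)
    obtain ⟨m', hm'⟩ := hT e0 (Finset.mem_insert_self _ _)
    have f1 : (⋃ e ∈ T, {x : k | Sol e (fun a => m a + x • (m' a - m a))}).Finite :=
      T.finite_toSet.biUnion fun e he => finite_bad m (fun a => m' a - m a) (hm e he)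
    have f2 := (finite_bad m' (fun a => m a - m' a) hm').preimage
      (f := fun x : k => 1 - x) (sub_right_injective.injOn)
    obtain ⟨x, hx⟩ := (f1.union f2).exists_notMem
    simp only [Set.mem_union, Set.mem_iUnion, Set.mem_ofPred_eq, Set.mem_preimage, not_or,
      not_exists] at hx
    refine ⟨fun a => m a + x • (m' a - m a), fun e he => ?_⟩
    rcases Finset.mem_insert.1 he with rfl | he
    · have heq : (fun a => m a + x • (m' a - m a)) = fun a => m' a + (1 - x) • (m a - m' a) := by
        funext a
        module
      rw [heq]
      exact hx.2
    · exact hx.1 e he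

lemma sol_of_subrep {k : Type} [Field k]
    (m : ∀ a : Q1, Matrix (Fin (d (t a))) (Fin (d (s a))) k)
    (U : ∀ i, Submodule k ((matToRep s t k d m).V i)) (hU : (matToRep s t k d m).IsSubrep U) :
    Sol ((matToRep s t k d m).subDim U) m := by
  let M := matToRep s t k d m
  let b : ∀ i, (Fin (M.subDim U i) → k) ≃ₗ[k] U i := fun i =>
    (Module.finBasis k (U i)).equivFun.symm
  let ι : ∀ i, (Fin (M.subDim U i) → k) →ₗ[k] (Fin (d i) → k) := fun i =>
    (U i).subtype ∘ₗ (b i).toLinearMap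
  have hι : ∀ i, LinearMap.ker (ι i) = ⊥ := fun i =>
    LinearMap.ker_eq_bot.2 ((U i).injective_subtype.comp (b i).injective)
  choose l hl using fun i => LinearMap.exists_leftInverse_of_injective (ι i) (hι i)
  refine ⟨fun i => LinearMap.toMatrix' (ι i), fun i => LinearMap.toMatrix' (l i),
    fun a => LinearMap.toMatrix' ((b (t a)).symm.toLinearMap ∘ₗ
      (M.hom a).restrict (hU a) ∘ₗ (b (s a)).toLinearMap), fun i => ?_, fun a => ?_⟩
  · rw [← LinearMap.toMatrix'_comp, hl, LinearMap.toMatrix'_id]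
  · rw [← LinearMap.toMatrix'_comp]
    conv_lhs => rw [← LinearMap.toMatrix'_toLin' (m a)]
    rw [← LinearMap.toMatrix'_comp]
    congr 1
    apply LinearMap.ext
    intro x
    have h3 : b (t a) ((b (t a)).symm ((M.hom a).restrict (hU a) (b (s a) x))) =
      (M.hom a).restrict (hU a) (b (s a) x) := LinearEquiv.apply_symm_apply _ _
    exact (congrArg Subtype.val h3).symm

lemma subrep_of_sol {k : Type} [Field k] (M : QRep k s t)
    (φ : ∀ i, M.V i ≃ₗ[k] (Fin (d i) → k))
    (h : Sol e (fun a => LinearMap.toMatrix'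
      ((φ (t a)).toLinearMap ∘ₗ M.hom a ∘ₗ (φ (s a)).symm.toLinearMap))) :
    ∃ U : ∀ i, Submodule k (M.V i), M.IsSubrep U ∧ M.subDim U = e := by
  obtain ⟨B, L, C, h1, h2⟩ := h
  refine ⟨fun i => LinearMap.range ((φ i).symm.toLinearMap ∘ₗ Matrix.toLin' (B i)), ?_, ?_⟩
  · rintro a _ ⟨y, rfl⟩
    refine ⟨Matrix.toLin' (C a) y, ?_⟩
    have := congrArg (fun X => Matrix.toLin' X y) (h2 a)
    simp only [Matrix.toLin'_mul, Matrix.toLin'_toMatrix', LinearMap.comp_apply,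
      LinearEquiv.coe_coe] at this
    simp only [LinearMap.comp_apply, LinearEquiv.coe_coe]
    rw [← this, LinearEquiv.symm_apply_apply]
  · funext i
    change Module.finrank k (LinearMap.range _) = e i
    rw [LinearMap.finrank_range_of_inj, Module.finrank_fin_fun]
    rw [LinearMap.coe_comp]
    refine (φ i).symm.injective.comp ?_
    refine Function.LeftInverse.injective (g := Matrix.toLin' (L i)) fun x => ?_
    rw [← LinearMap.comp_apply, ← Matrix.toLin'_mul, h1, Matrix.toLin'_one, LinearMap.id_apply]

end Helpers

/-- the semistable cone of `d` equals the set of `θ` orthogonal to `d` with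
`θ(e) ≤ 0` for all generic subdimension vectors `e` of `d`. -/
theorem stmt5 (k : Type) [Field k] [IsAlgClosed k] [CharZero k]
    {Q0 Q1 : Type} [Fintype Q0] [Fintype Q1] (s t : Q1 → Q0) (d : Q0 → ℕ) :
    SstCone k s t d =
      {θ : Q0 → ℝ | QRep.pair θ d = 0 ∧
        ∀ e : Q0 → ℕ, GenericSub k s t e d → QRep.pair θ e ≤ 0} := by
  classical
  ext θ
  constructor
  · rintro ⟨h0, M, hM, hss⟩
    refine ⟨h0, fun e he => ?_⟩
    obtain ⟨U, hU, rfl⟩ := he.2 M hM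
    exact hss.2 U hU
  · rintro ⟨h0, hθ⟩
    refine ⟨h0, ?_⟩
    have hfin : {e : Q0 → ℕ | e ≤ d ∧ ¬ GenericSub k s t e d}.Finite :=
      (Set.finite_Iic d).subset fun e he => he.1
    obtain ⟨m, hm⟩ := exists_good (k := k) (s := s) (t := t) (d := d) hfin.toFinset (by
      intro e he
      obtain ⟨hed, hng⟩ := hfin.mem_toFinset.1 he
      by_contra! hc
      refine hng ⟨hed, fun M hM => ?_⟩
      have hrk : ∀ i, Module.finrank k (M.V i) = Module.finrank k (Fin (d i) → k) := fun i => by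
        rw [Module.finrank_fin_fun]; exact congrFun hM i
      exact subrep_of_sol M (fun i => LinearEquiv.ofFinrankEq _ _ (hrk i)) (hc _))
    have hdim : (matToRep s t k d m).dimVec = d := by
      funext i
      exact Module.finrank_fin_fun k
    refine ⟨matToRep s t k d m, hdim, ?_, fun U hU => ?_⟩
    · rw [hdim]; exact h0
    · apply hθ
      by_contra hng
      refine hm _ (hfin.mem_toFinset.2 ⟨?_, hng⟩) (sol_of_subrep m U hU)
      intro i
      exact (Submodule.finrank_le (U i)).trans (congrFun hdim i).le
end

section
/- For all dimension vectors d, e and positive integers k, one has k·ext(d, e) = ext(d, k·e) = ext(k·d, e), where ext(d,e) := max over generic subdimension vectors d' ↪ d of −⟨d', e⟩, and equivalently max over generic quotients e ↪ e' of −⟨d, e − e'⟩. -/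
open scoped BigOperators

section HS
variable {Q0 Q1 : Type} {s t : Q1 → Q0}

/-- Matrix form of "there is a (split) subrepresentation with index types `κ`". -/
def HasSub {R : Type} [CommRing R] {ι : Q0 → Type} (κ : Q0 → Type) [∀ i, Fintype (ι i)]
    [∀ i, Fintype (κ i)] [∀ i, DecidableEq (κ i)]
    (M : ∀ a : Q1, Matrix (ι (t a)) (ι (s a)) R) : Prop :=
  ∃ (P : ∀ i, Matrix (ι i) (κ i) R) (Q : ∀ i, Matrix (κ i) (ι i) R)
    (X : ∀ a, Matrix (κ (t a)) (κ (s a)) R),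
    (∀ i, Q i * P i = 1) ∧ ∀ a, M a * P (s a) = P (t a) * X a

variable {ι κ : Q0 → Type} [∀ i, Fintype (ι i)]
    [∀ i, Fintype (κ i)] [∀ i, DecidableEq (κ i)]

theorem HasSub.map {R S : Type} [CommRing R] [CommRing S] (f : R →+* S)
    {M : ∀ a : Q1, Matrix (ι (t a)) (ι (s a)) R} (h : HasSub κ M) :
    HasSub κ (fun a => (M a).map f) := by
  obtain ⟨P, Q, X, h1, h2⟩ := h
  refine ⟨fun i => (P i).map f, fun i => (Q i).map f, fun a => (X a).map f, fun i => ?_,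
    fun a => ?_⟩
  · rw [← Matrix.map_mul, h1]; simp
  · rw [← Matrix.map_mul, h2, Matrix.map_mul]

theorem hasSub_iff {k : Type} [Field k] (M : QRep k s t) [∀ i, DecidableEq (ι i)]
    (b : ∀ i, Module.Basis (ι i) k (M.V i)) :
    (∃ U : ∀ i, Submodule k (M.V i), M.IsSubrep U ∧
      ∀ i, Module.finrank k (U i) = Fintype.card (κ i)) ↔
    HasSub κ (fun a => LinearMap.toMatrix (b (s a)) (b (t a)) (M.hom a)) := by
  constructor
  · rintro ⟨U, hU, hd⟩
    let c : ∀ i, Module.Basis (κ i) k (U i) := fun i =>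
      (Module.finBasisOfFinrankEq k (U i) (hd i)).reindex (Fintype.equivFin (κ i)).symm
    have hex : ∀ i, ∃ g : M.V i →ₗ[k] U i, g ∘ₗ (U i).subtype = LinearMap.id := fun i =>
      LinearMap.exists_leftInverse_of_injective _ (by simp)
    choose g hg using hex
    refine ⟨fun i => LinearMap.toMatrix (c i) (b i) (U i).subtype,
      fun i => LinearMap.toMatrix (b i) (c i) (g i),
      fun a => LinearMap.toMatrix (c (s a)) (c (t a))
        ((M.hom a).restrict (fun x hx => hU a x hx)), fun i => ?_, fun a => ?_⟩
    · rw [← LinearMap.toMatrix_comp, hg, LinearMap.toMatrix_id]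
    · rw [← LinearMap.toMatrix_comp, ← LinearMap.toMatrix_comp]
      congr 1
  · rintro ⟨P, Q, X, h1, h2⟩
    let e : ∀ i, Module.Basis (κ i) k (κ i → k) := fun i => Pi.basisFun k (κ i)
    let p : ∀ i, (κ i → k) →ₗ[k] M.V i := fun i => Matrix.toLin (e i) (b i) (P i)
    have hinj : ∀ i, Function.Injective (p i) := by
      intro i
      have : (Matrix.toLin (b i) (e i) (Q i)) ∘ₗ (p i) = LinearMap.id := by
        simp only [p]
        rw [← Matrix.toLin_mul, h1, Matrix.toLin_one]
      exact Function.LeftInverse.injective (g := Matrix.toLin (b i) (e i) (Q i))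
        (fun x => LinearMap.congr_fun this x)
    refine ⟨fun i => LinearMap.range (p i), ?_, fun i => ?_⟩
    · rintro a x ⟨y, rfl⟩
      refine ⟨Matrix.toLin (e (s a)) (e (t a)) (X a) y, ?_⟩
      have h3 := congrArg (Matrix.toLin (e (s a)) (b (t a))) (h2 a)
      rw [Matrix.toLin_mul (e (s a)) (b (s a)) (b (t a)),
        Matrix.toLin_mul (e (s a)) (e (t a)) (b (t a)), Matrix.toLin_toMatrix] at h3
      exact (LinearMap.congr_fun h3 y).symm
    · rw [LinearMap.finrank_range_of_inj (hinj i)]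
      simp

theorem genericSub_iff {k : Type} [Field k] [∀ i, DecidableEq (ι i)] (d d' : Q0 → ℕ)
    (hι : ∀ i, Fintype.card (ι i) = d i) (hκ : ∀ i, Fintype.card (κ i) = d' i) :
    GenericSub k s t d' d ↔ d' ≤ d ∧
      ∀ M : ∀ a : Q1, Matrix (ι (t a)) (ι (s a)) k, HasSub κ M := by
  unfold GenericSub
  refine and_congr_right fun _ => ⟨fun h M => ?_, fun h M hM => ?_⟩
  · let N : QRep k s t := { V := fun i => ι i → k, hom := fun a => (M a).mulVecLin }
    obtain ⟨U, hU, hd⟩ := h N (by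
      funext i
      change Module.finrank k (ι i → k) = _
      simp [hι])
    have := (hasSub_iff (κ := κ) N (fun i => Pi.basisFun k (ι i))).1
      ⟨U, hU, fun i => by rw [hκ, ← hd]; rfl⟩
    convert this using 2 with a
    change M a = LinearMap.toMatrix' ((M a).mulVecLin)
    exact (LinearMap.toMatrix'_toLin' _).symm
  · let b : ∀ i, Module.Basis (ι i) k (M.V i) := fun i =>
      (Module.finBasisOfFinrankEq k (M.V i)
        (show _ = Fintype.card (ι i) by rw [hι, ← hM]; rfl)).reindex
          (Fintype.equivFin (ι i)).symm
    obtain ⟨U, hU, hd⟩ := (hasSub_iff (κ := κ) M b).2 (h _)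
    exact ⟨U, hU, funext fun i => by rw [← hκ, ← hd]; rfl⟩

theorem HasSub.of_range {B L : Type} [CommRing B] [CommRing L] (f : B →+* L)
    (hf : Function.Injective f) {M : ∀ a : Q1, Matrix (ι (t a)) (ι (s a)) B}
    (P : ∀ i, Matrix (ι i) (κ i) L) (Q : ∀ i, Matrix (κ i) (ι i) L)
    (X : ∀ a, Matrix (κ (t a)) (κ (s a)) L)
    (hP : ∀ i x y, ∃ z, f z = P i x y) (hQ : ∀ i x y, ∃ z, f z = Q i x y)
    (hX : ∀ i x y, ∃ z, f z = X i x y)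
    (h1 : ∀ i, Q i * P i = 1) (h2 : ∀ a, (M a).map f * P (s a) = P (t a) * X a) :
    HasSub κ M := by
  choose p hp using hP
  choose q hq using hQ
  choose x hx using hX
  have hp' : P = fun i => (Matrix.of (p i)).map f := by
    funext i; ext; simp [hp]
  have hq' : Q = fun i => (Matrix.of (q i)).map f := by
    funext i; ext; simp [hq]
  have hx' : X = fun i => (Matrix.of (x i)).map f := by
    funext i; ext; simp [hx]
  subst hp' hq' hx'
  refine ⟨fun i => Matrix.of (p i), fun i => Matrix.of (q i), fun i => Matrix.of (x i),
    fun i => ?_, fun a => ?_⟩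
  · have := h1 i
    rw [← Matrix.map_mul, ← Matrix.map_one f (map_zero f) (map_one f)] at this
    exact Matrix.map_injective hf this
  · have := h2 a
    rw [← Matrix.map_mul, ← Matrix.map_mul] at this
    exact Matrix.map_injective hf this

theorem HasSub.exists_fg {R L : Type} [CommRing R] [CommRing L] [Algebra R L]
    [Finite Q0] [Finite Q1]
    {M : ∀ a : Q1, Matrix (ι (t a)) (ι (s a)) R}
    (h : HasSub κ (fun a => (M a).map (algebraMap R L))) :
    ∃ B : Subalgebra R L, Algebra.FiniteType R B ∧
      HasSub κ (fun a => (M a).map (algebraMap R B)) := by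
  obtain ⟨P, Q, X, h1, h2⟩ := h
  let T : Set L := (⋃ i, ⋃ x, ⋃ y, {P i x y}) ∪ (⋃ i, ⋃ x, ⋃ y, {Q i x y}) ∪
    (⋃ i, ⋃ x, ⋃ y, {X i x y})
  have hT : T.Finite := by
    refine ((Set.finite_iUnion fun i => Set.finite_iUnion fun x => Set.finite_iUnion fun y =>
      Set.finite_singleton _).union (Set.finite_iUnion fun i => Set.finite_iUnion fun x =>
        Set.finite_iUnion fun y => Set.finite_singleton _)).union
        (Set.finite_iUnion fun i => Set.finite_iUnion fun x => Set.finite_iUnion fun y =>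
      Set.finite_singleton _)
  let B := Algebra.adjoin R T
  have hP : ∀ i x y, P i x y ∈ B := fun i x y => Algebra.subset_adjoin (by
    left; left; simp only [Set.mem_iUnion]; exact ⟨i, x, y, rfl⟩)
  have hQ : ∀ i x y, Q i x y ∈ B := fun i x y => Algebra.subset_adjoin (by
    left; right; simp only [Set.mem_iUnion]; exact ⟨i, x, y, rfl⟩)
  have hX : ∀ i x y, X i x y ∈ B := fun i x y => Algebra.subset_adjoin (by
    right; simp only [Set.mem_iUnion]; exact ⟨i, x, y, rfl⟩)
  have hft : Algebra.FiniteType R B := by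
    rw [← Subalgebra.fg_iff_finiteType]
    exact ⟨hT.toFinset, by simp [B]⟩
  let v : B →+* L := B.val
  have hv : Function.Injective v := Subtype.val_injective
  exact ⟨B, hft, HasSub.of_range v hv P Q X (fun i x y => ⟨⟨_, hP i x y⟩, rfl⟩)
    (fun i x y => ⟨⟨_, hQ i x y⟩, rfl⟩) (fun i x y => ⟨⟨_, hX i x y⟩, rfl⟩) h1 h2⟩

theorem exists_point (k B : Type) [Field k] [IsAlgClosed k] [CommRing B] [Nontrivial B]
    [Algebra k B] [Algebra.FiniteType k B] : Nonempty (B →ₐ[k] k) := by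
  obtain ⟨m, hm⟩ := Ideal.exists_maximal B
  let _ := Ideal.Quotient.field m
  have : Module.Finite k (B ⧸ m) := finite_of_finite_type_of_isJacobsonRing k (B ⧸ m)
  let f : B ⧸ m →ₐ[k] k := IsAlgClosed.lift (M := k) (R := k) (S := B ⧸ m)
  exact ⟨f.comp (Ideal.Quotient.mkₐ k m)⟩

/-- Nullstellensatz descent. -/
theorem HasSub.descend {k L : Type} [Field k] [IsAlgClosed k] [Field L] [Algebra k L]
    [Finite Q0] [Finite Q1]
    {M : ∀ a : Q1, Matrix (ι (t a)) (ι (s a)) k}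
    (h : HasSub κ (fun a => (M a).map (algebraMap k L))) : HasSub κ M := by
  obtain ⟨B, hB, hs⟩ := h.exists_fg
  obtain ⟨f⟩ := exists_point k B
  have := hs.map (f : B →+* k)
  convert this using 2 with a
  ext x y
  exact (f.commutes _).symm

end HS

section Val

theorem exists_minor_s7 {ι κ K : Type} [Fintype ι] [Fintype κ] [DecidableEq κ] [Field K]
    (P : Matrix ι κ K) (Q : Matrix κ ι K) (h : Q * P = 1) :
    ∃ J : κ → ι, (P.submatrix J id).det ≠ 0 := by
  classical
  by_contra! hc
  have h1 : (Q * P).det = 0 := by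
    have hrow : (Q * P) = fun j => ∑ i, Q j i • P i := by
      funext j
      ext l
      rw [Matrix.mul_apply, Finset.sum_apply]
      simp
    have : (Q * P).det = Matrix.detRowAlternating.toMultilinearMap (fun j => ∑ i, Q j i • P i) := by
      rw [← hrow]; rfl
    rw [this, MultilinearMap.map_sum]
    refine Finset.sum_eq_zero fun r _ => ?_
    rw [MultilinearMap.map_smul_univ]
    have : (Matrix.detRowAlternating.toMultilinearMap fun i => P (r i)) = 0 := hc r
    rw [this, smul_zero]
  rw [h] at h1
  simp at h1

theorem det_one_updateRow {κ K : Type} [Fintype κ] [DecidableEq κ] [Field K] (r : κ → K) (j : κ) :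
    ((1 : Matrix κ κ K).updateRow j r).det = r j := by
  rw [← Matrix.cramer_transpose_apply]
  simp

theorem saturate {ι κ K : Type} [Fintype ι] [Fintype κ] [DecidableEq ι] [DecidableEq κ] [Field K]
    (V : ValuationSubring K) (P : Matrix ι κ K) (Q : Matrix κ ι K) (h : Q * P = 1) :
    ∃ g g' : Matrix κ κ K, g * g' = 1 ∧ g' * g = 1 ∧ (∀ x y, (P * g) x y ∈ V) ∧
      ∃ J : κ → ι, (P * g).submatrix J id = 1 := by
  obtain ⟨J0, hJ0⟩ := exists_minor_s7 P Q h
  have : Nonempty (κ → ι) := ⟨J0⟩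
  obtain ⟨J, hJ⟩ := Finite.exists_max (fun J : κ → ι => V.valuation (P.submatrix J id).det)
  have hne : (P.submatrix J id).det ≠ 0 := by
    intro h0
    have := hJ J0
    rw [h0, map_zero] at this
    exact hJ0 ((map_eq_zero V.valuation).1 (le_antisymm this zero_le))
  have hu : IsUnit (P.submatrix J id).det := isUnit_iff_ne_zero.2 hne
  refine ⟨(P.submatrix J id)⁻¹, P.submatrix J id, Matrix.nonsing_inv_mul _ hu,
    Matrix.mul_nonsing_inv _ hu, fun i j => ?_, J, ?_⟩
  · set g := (P.submatrix J id)⁻¹ with hg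
    have hone : (P * g).submatrix J id = 1 := by
      rw [← Matrix.mul_nonsing_inv _ hu]
      ext; simp [Matrix.mul_apply, hg]
    have hP : P = (P * g) * P.submatrix J id := by
      rw [Matrix.mul_assoc, Matrix.nonsing_inv_mul _ hu, Matrix.mul_one]
    have h1 : P.submatrix (Function.update J j i) id =
        ((1 : Matrix κ κ K).updateRow j ((P * g) i)) * P.submatrix J id := by
      conv_lhs => rw [hP]
      rw [← Matrix.submatrix_mul_equiv _ _ _ (Equiv.refl κ)]
      congr 1
      ext a b
      by_cases hab : a = j
      · subst hab; simp
      · rw [← hone]; simp [hab, Matrix.updateRow_ne]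
    have h2 := hJ (Function.update J j i)
    rw [h1, Matrix.det_mul, det_one_updateRow, map_mul] at h2
    rw [← V.valuation_le_one_iff]
    have hpos : 0 < V.valuation (P.submatrix J id).det := by
      rw [zero_lt_iff]; exact (map_ne_zero _).2 hne
    exact le_of_mul_le_mul_right (by rwa [one_mul]) hpos
  · rw [← Matrix.mul_nonsing_inv _ hu]
    ext; simp [Matrix.mul_apply]

variable {Q0 Q1 : Type} {s t : Q1 → Q0}
variable {ι κ : Q0 → Type} [∀ i, Fintype (ι i)]
    [∀ i, Fintype (κ i)] [∀ i, DecidableEq (κ i)]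

/-- Valuative criterion: a subrepresentation over the field extends over the valuation ring. -/
theorem HasSub.extend {K : Type} [Field K] (V : ValuationSubring K)
    (M : ∀ a : Q1, Matrix (ι (t a)) (ι (s a)) V)
    (h : HasSub κ (fun a => (M a).map V.subtype)) : HasSub κ M := by
  classical
  obtain ⟨P, Q, X, h1, h2⟩ := h
  choose g g' hg hg' hV J hJ using fun i => saturate V (P i) (Q i) (h1 i)
  have hQP : ∀ i, ((1 : Matrix (ι i) (ι i) K).submatrix (J i) id) * (P i * g i) = 1 := by
    intro i
    rw [← hJ i]
    ext x y
    simp [Matrix.mul_apply, Matrix.one_apply]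
  have hMP : ∀ a, (M a).map V.subtype * (P (s a) * g (s a)) =
      (P (t a) * g (t a)) * (g' (t a) * X a * g (s a)) := by
    intro a
    rw [← Matrix.mul_assoc, h2 a]
    simp only [Matrix.mul_assoc]
    rw [← Matrix.mul_assoc (g (t a)), hg, Matrix.one_mul]
  refine HasSub.of_range V.subtype V.subtype_injective (fun i => P i * g i)
    (fun i => (1 : Matrix (ι i) (ι i) K).submatrix (J i) id)
    (fun a => g' (t a) * X a * g (s a)) (fun i x y => ⟨⟨_, hV i x y⟩, rfl⟩) (fun i x y => ?_)
    (fun a x y => ?_) hQP hMP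
  · by_cases hxy : J i x = y
    · exact ⟨1, by subst hxy; simp [Matrix.one_apply]⟩
    · exact ⟨0, by simp [hxy]⟩
  · have : g' (t a) * X a * g (s a) = ((M a).map V.subtype * (P (s a) * g (s a))).submatrix
        (J (t a)) id := by
      rw [hMP a, ← Matrix.submatrix_mul_equiv _ _ _ (Equiv.refl _)]
      have := hJ (t a)
      simp only [Equiv.coe_refl]
      rw [this, Matrix.one_mul]
      rfl
    rw [this]
    refine ⟨∑ j, M a (J (t a) x) j * ⟨_, hV (s a) j y⟩, ?_⟩
    simp [Matrix.mul_apply]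

/-- Specialization at `t = ∞`. -/
theorem HasSub.specialize {L K : Type} [Field L] [Field K] [Algebra L K] (u : K)
    (hu : Transcendental L u)
    (M N : ∀ a : Q1, Matrix (ι (t a)) (ι (s a)) L)
    (h : HasSub κ (fun a => (N a).map (algebraMap L K) + u • (M a).map (algebraMap L K))) :
    ∃ (F : Type) (_ : Field F) (_ : Algebra L F),
      HasSub κ (fun a => (N a).map (algebraMap L F)) := by
  let A : Subring K := (Algebra.adjoin L {u}).toSubring
  have huA : u ∈ A := Algebra.subset_adjoin rfl
  have hI : Ideal.span {(⟨u, huA⟩ : A)} ≠ ⊤ := by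
    rw [Ne, Ideal.span_singleton_eq_top]
    intro hun
    obtain ⟨⟨v, hv⟩, hv1⟩ := hun.exists_right_inv
    have hv1 : u * v = 1 := congrArg Subtype.val hv1
    have hv' : v ∈ Algebra.adjoin L {u} := hv
    rw [Algebra.adjoin_singleton_eq_range_aeval] at hv'
    obtain ⟨p, hp⟩ := hv'
    have hp : Polynomial.aeval u p = v := hp
    have : Polynomial.aeval u (Polynomial.X * p - 1) = 0 := by
      simp [hp, hv1]
    have h0 : (Polynomial.X * p - 1 : Polynomial L) = 0 := by
      by_contra hne
      exact hu ⟨_, hne, this⟩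
    have := congrArg (Polynomial.coeff · 0) h0
    simp at this
  obtain ⟨V, hAV, hIV⟩ := Ideal.image_subset_nonunits_valuationSubring _ hI
  have hLV : ∀ x : L, algebraMap L K x ∈ V := fun x =>
    hAV (Subalgebra.algebraMap_mem (Algebra.adjoin L {u}) x)
  have hun : u ∈ V.nonunits := hIV ⟨_, Ideal.subset_span rfl, rfl⟩
  let f : L →+* V := (algebraMap L K).codRestrict V hLV
  let u' : V := ⟨u, hAV huA⟩
  have hu' : IsLocalRing.residue V u' = 0 := by
    rw [IsLocalRing.residue_eq_zero_iff]
    exact (ValuationSubring.mem_nonunits_iff_exists_mem_maximalIdeal.1 hun).2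
  have h1 : HasSub κ (fun a => (N a).map f + u' • (M a).map f) := by
    apply HasSub.extend V
    have he : (fun a => ((N a).map f + u' • (M a).map f).map V.subtype) =
        (fun a => (N a).map (algebraMap L K) + u • (M a).map (algebraMap L K)) := by
      funext a
      ext x y
      rfl
    rw [he]
    exact h
  have h2 := h1.map (IsLocalRing.residue V)
  refine ⟨IsLocalRing.ResidueField V, inferInstance, ((IsLocalRing.residue V).comp f).toAlgebra, ?_⟩
  have he : (fun a => ((N a).map f + u' • (M a).map f).map (IsLocalRing.residue V)) =
      (fun a => (N a).map ((IsLocalRing.residue V).comp f)) := by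
    funext a
    ext x y
    simp only [Matrix.map_apply, Matrix.add_apply, Matrix.smul_apply, map_add, smul_eq_mul,
      map_mul, hu', zero_mul, add_zero]
    rfl
  rw [he] at h2
  exact h2

end Val

section PS

theorem fixedPoint_pi {L J : Type} [Field L] (Φ : (J → PowerSeries L) → (J → PowerSeries L))
    (hΦ : ∀ (n : ℕ) z w, (∀ j, PowerSeries.X ^ n ∣ z j - w j) →
      ∀ j, PowerSeries.X ^ (n + 1) ∣ Φ z j - Φ w j) : ∃ z, Φ z = z := by
  let z : ℕ → J → PowerSeries L := fun n => Φ^[n] 0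
  have hz : ∀ n, z (n + 1) = Φ (z n) := fun n => Function.iterate_succ_apply' _ _ _
  have h1 : ∀ n j, (PowerSeries.X : PowerSeries L) ^ n ∣ z (n + 1) j - z n j := by
    intro n
    induction n with
    | zero => intro j; simp
    | succ n ih => intro j; rw [hz (n + 1), hz n]; exact hΦ n _ _ (by simpa only [hz] using ih) j
  have h2 : ∀ n m j, (PowerSeries.X : PowerSeries L) ^ n ∣ z (n + m) j - z n j := by
    intro n m j
    induction m with
    | zero => simp
    | succ m ih =>
      have := dvd_trans (pow_dvd_pow (PowerSeries.X : PowerSeries L) (Nat.le_add_right n m))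
        (h1 (n + m) j)
      have h3 := dvd_add this ih
      rw [sub_add_sub_cancel] at h3
      exact h3
  let y : J → PowerSeries L := fun j => PowerSeries.mk fun n => PowerSeries.coeff n (z (n + 1) j)
  have h3 : ∀ n j, (PowerSeries.X : PowerSeries L) ^ n ∣ y j - z n j := by
    intro n j
    rw [PowerSeries.X_pow_dvd_iff]
    intro l hl
    obtain ⟨r, rfl⟩ : ∃ r, n = (l + 1) + r := ⟨n - (l + 1), by omega⟩
    have := PowerSeries.X_pow_dvd_iff.1 (h2 (l + 1) r j) l (by omega)
    rw [map_sub, sub_eq_zero] at this ⊢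
    rw [this]
    simp [y]
  refine ⟨y, ?_⟩
  funext j
  rw [← sub_eq_zero]
  ext n
  have h4 := hΦ n _ _ (h3 n) j
  have h5 := h3 (n + 1) j
  rw [← hz] at h4
  have h6 := dvd_sub h4 h5
  rw [sub_sub_sub_cancel_right] at h6
  simpa using PowerSeries.X_pow_dvd_iff.1 h6 n (by omega)

theorem fixedPoint {L E : Type} [Field L] [AddCommGroup E] [Module (PowerSeries L) E]
    [Module.Finite (PowerSeries L) E] [Module.Free (PowerSeries L) E] (Φ : E → E)
    (hΦ : ∀ (n : ℕ) z w v, z - w = (PowerSeries.X : PowerSeries L) ^ n • v →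
      ∃ v', Φ z - Φ w = (PowerSeries.X : PowerSeries L) ^ (n + 1) • v') : ∃ z, Φ z = z := by
  let b := (Module.Free.chooseBasis (PowerSeries L) E).equivFun
  obtain ⟨z, hz⟩ := fixedPoint_pi (fun x => b (Φ (b.symm x))) (by
    intro n z w h j
    choose v hv using h
    obtain ⟨v', hv'⟩ := hΦ n (b.symm z) (b.symm w) (b.symm v) (by
      rw [← map_sub, ← map_smul]
      congr 1
      funext j
      exact hv j)
    refine ⟨b v' j, ?_⟩
    rw [← Pi.sub_apply, ← map_sub, hv', map_smul]
    rfl)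
  exact ⟨b.symm z, by
    apply b.injective
    rw [hz]; simp⟩

variable {Q0 Q1 : Type} [Fintype Q0] [Fintype Q1] {s t : Q1 → Q0}
variable {ι κ : Q0 → Type} [∀ i, Fintype (ι i)]
    [∀ i, Fintype (κ i)] [∀ i, DecidableEq (κ i)]

/-- the differential of `(P, X) ↦ M P - P X` -/
def delta {S : Type} [CommRing S] (M : ∀ a : Q1, Matrix (ι (t a)) (ι (s a)) S)
    (P : ∀ i, Matrix (ι i) (κ i) S) (X : ∀ a, Matrix (κ (t a)) (κ (s a)) S) :
    ((∀ i, Matrix (ι i) (κ i) S) × (∀ a, Matrix (κ (t a)) (κ (s a)) S)) →ₗ[S]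
      (∀ a, Matrix (ι (t a)) (κ (s a)) S) where
  toFun z := fun a => M a * z.1 (s a) - z.1 (t a) * X a - P (t a) * z.2 a
  map_add' x y := by
    funext a
    simp [Matrix.mul_add, Matrix.add_mul]
    abel
  map_smul' c x := by
    funext a
    simp [smul_sub]

theorem delta_surj_map {L S : Type} [Field L] [CommRing S] (f : L →+* S)
    (M : ∀ a : Q1, Matrix (ι (t a)) (ι (s a)) L)
    (P : ∀ i, Matrix (ι i) (κ i) L) (X : ∀ a, Matrix (κ (t a)) (κ (s a)) L)
    (h : Function.Surjective (delta M P X)) :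
    Function.Surjective (delta (fun a => (M a).map f) (fun i => (P i).map f)
      (fun a => (X a).map f)) := by
  classical
  rw [← LinearMap.range_eq_top, eq_top_iff]
  intro C _
  have hC : C = ∑ a, ∑ x, ∑ y, C a x y • (Pi.single a (Matrix.single x y (1 : S)) :
      ∀ a, Matrix (ι (t a)) (κ (s a)) S) := by
    rw [← Finset.univ_sum_single C]
    refine Finset.sum_congr rfl fun a _ => ?_
    conv_lhs => rw [Matrix.matrix_eq_sum_single (C a)]
    simp only [← Pi.single_smul, Matrix.smul_single, smul_eq_mul, mul_one]
    rw [← AddMonoidHom.single_apply, map_sum]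
    simp only [map_sum]
    simp
  rw [hC]
  refine Submodule.sum_mem _ fun a _ => Submodule.sum_mem _ fun x _ => Submodule.sum_mem _
    fun y _ => Submodule.smul_mem _ _ ?_
  obtain ⟨z, hz⟩ := h (Pi.single a (Matrix.single x y (1 : L)))
  refine ⟨(fun i => (z.1 i).map f, fun a => (z.2 a).map f), ?_⟩
  funext b
  have := congrArg (fun m => Matrix.map m f) (congrFun hz b)
  simp only [delta, LinearMap.coe_mk, AddHom.coe_mk] at this ⊢
  rw [Matrix.map_sub _ (map_sub f), Matrix.map_sub _ (map_sub f), Matrix.map_mul, Matrix.map_mul,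
    Matrix.map_mul] at this
  rw [this]
  by_cases hb : b = a
  · subst hb
    simp [Matrix.map_single]
  · simp [Pi.single_eq_of_ne hb]

theorem hasSub_ps {L : Type} [Field L]
    (M N : ∀ a : Q1, Matrix (ι (t a)) (ι (s a)) L)
    (P : ∀ i, Matrix (ι i) (κ i) L) (Q : ∀ i, Matrix (κ i) (ι i) L)
    (X : ∀ a, Matrix (κ (t a)) (κ (s a)) L)
    (h1 : ∀ i, Q i * P i = 1) (h2 : ∀ a, M a * P (s a) = P (t a) * X a)
    (h : Function.Surjective (delta M P X)) :
    HasSub κ (fun a => (M a).map (algebraMap L (PowerSeries L)) +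
      (PowerSeries.X : PowerSeries L) • (N a).map (algebraMap L (PowerSeries L))) := by
  classical
  set f := algebraMap L (PowerSeries L) with hf
  obtain ⟨σ, hσ⟩ := LinearMap.exists_rightInverse_of_surjective _
    (LinearMap.range_eq_top.2 (delta_surj_map f M P X h))
  let G : ((∀ i, Matrix (ι i) (κ i) (PowerSeries L)) ×
      (∀ a, Matrix (κ (t a)) (κ (s a)) (PowerSeries L))) →
      (∀ a, Matrix (ι (t a)) (κ (s a)) (PowerSeries L)) := fun z a =>
    - ((N a).map f * (P (s a)).map f) +
      (PowerSeries.X : PowerSeries L) • (z.1 (t a) * z.2 a - (N a).map f * z.1 (s a))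
  obtain ⟨z, hz⟩ := fixedPoint (L := L) (fun z => σ (G z)) (by
    intro n z w v hv
    have hv1 : ∀ i, z.1 i = w.1 i + (PowerSeries.X : PowerSeries L) ^ n • v.1 i := fun i => by
      have := congrFun (congrArg Prod.fst hv) i
      simp only [Prod.fst_sub, Pi.sub_apply, Prod.smul_fst, Pi.smul_apply] at this
      rw [← this]; abel
    have hv2 : ∀ i, z.2 i = w.2 i + (PowerSeries.X : PowerSeries L) ^ n • v.2 i := fun i => by
      have := congrFun (congrArg Prod.snd hv) i
      simp only [Prod.snd_sub, Pi.sub_apply, Prod.smul_snd, Pi.smul_apply] at this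
      rw [← this]; abel
    refine ⟨σ (fun a => z.1 (t a) * v.2 a + v.1 (t a) * w.2 a - (N a).map f * v.1 (s a)), ?_⟩
    rw [← map_sub, ← map_smul]
    congr 1
    funext a
    simp only [G, Pi.sub_apply, Pi.smul_apply]
    rw [add_sub_add_left_eq_sub, ← smul_sub, pow_succ', mul_smul]
    congr 1
    rw [hv1 (s a), hv2 a]
    conv_lhs => rw [Matrix.mul_add, hv1 (t a)]
    rw [hv1 (t a)]
    simp only [Matrix.mul_add, Matrix.add_mul, smul_add, smul_sub, Matrix.mul_smul,
      Matrix.smul_mul]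
    abel)
  have hz' : delta (fun a => (M a).map f) (fun i => (P i).map f) (fun a => (X a).map f) z = G z := by
    conv_lhs => rw [← hz]
    exact LinearMap.congr_fun hσ (G z)
  let P' : ∀ i, Matrix (ι i) (κ i) (PowerSeries L) := fun i =>
    (P i).map f + (PowerSeries.X : PowerSeries L) • z.1 i
  have hu : ∀ i, IsUnit ((Q i).map f * P' i).det := by
    intro i
    rw [PowerSeries.isUnit_iff_constantCoeff, RingHom.map_det]
    have : (PowerSeries.constantCoeff (R := L)).mapMatrix ((Q i).map f * P' i) = 1 := by
      simp only [P', Matrix.mul_add, map_add, ← Matrix.map_mul, h1, Matrix.mul_smul]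
      ext x y
      by_cases hxy : x = y
      · subst hxy; simp [hf, Matrix.one_apply]
      · simp [hf, hxy]
    rw [this]
    simp
  refine ⟨P', fun i => ((Q i).map f * P' i)⁻¹ * (Q i).map f,
    fun a => (X a).map f + (PowerSeries.X : PowerSeries L) • z.2 a, fun i => ?_, fun a => ?_⟩
  · rw [Matrix.mul_assoc, Matrix.nonsing_inv_mul _ (hu i)]
  · have e1 := congrFun hz' a
    simp only [delta, LinearMap.coe_mk, AddHom.coe_mk, G] at e1
    have e2 : (M a).map f * (P (s a)).map f = (P (t a)).map f * (X a).map f := by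
      rw [← Matrix.map_mul, h2, Matrix.map_mul]
    have e3 : (M a).map f * z.1 (s a) = z.1 (t a) * (X a).map f + (P (t a)).map f * z.2 a +
      (- ((N a).map f * (P (s a)).map f) +
      (PowerSeries.X : PowerSeries L) • (z.1 (t a) * z.2 a - (N a).map f * z.1 (s a))) := by
      rw [← e1]; abel
    simp only [P', Matrix.mul_add, Matrix.add_mul, Matrix.mul_smul, Matrix.smul_mul, e2, e3,
      smul_add, smul_sub, smul_neg]
    abel

theorem transc_ps (L : Type) [Field L] : Transcendental L
    ((algebraMap (PowerSeries L) (FractionRing (PowerSeries L)) PowerSeries.X)⁻¹) := by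
  intro h
  have h := h.inv
  rw [inv_inv] at h
  have h := (isAlgebraic_algebraMap_iff (IsFractionRing.injective (PowerSeries L)
    (FractionRing (PowerSeries L)))).1 h
  obtain ⟨p, hp, h0⟩ := h
  apply hp
  apply Polynomial.coe_injective L
  rw [Polynomial.coe_zero, ← h0, ← Polynomial.eval₂_C_X_eq_coe]
  rfl

/-- Main deformation theorem. -/
theorem hasSub_of_surj {k L : Type} [Field k] [IsAlgClosed k] [Field L] [Algebra k L]
    (M : ∀ a : Q1, Matrix (ι (t a)) (ι (s a)) L)
    (P : ∀ i, Matrix (ι i) (κ i) L) (Q : ∀ i, Matrix (κ i) (ι i) L)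
    (X : ∀ a, Matrix (κ (t a)) (κ (s a)) L)
    (h1 : ∀ i, Q i * P i = 1) (h2 : ∀ a, M a * P (s a) = P (t a) * X a)
    (h : Function.Surjective (delta M P X))
    (N : ∀ a : Q1, Matrix (ι (t a)) (ι (s a)) k) : HasSub κ N := by
  let N' : ∀ a : Q1, Matrix (ι (t a)) (ι (s a)) L := fun a => (N a).map (algebraMap k L)
  let K := FractionRing (PowerSeries L)
  have h3 := (hasSub_ps M N' P Q X h1 h2 h).map (algebraMap (PowerSeries L) K)
  have h4 : HasSub κ (fun a => (N' a).map (algebraMap L K) +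
      (algebraMap (PowerSeries L) K PowerSeries.X)⁻¹ • (M a).map (algebraMap L K)) := by
    obtain ⟨P', Q', X', h5, h6⟩ := h3
    refine ⟨P', Q', fun a => (algebraMap (PowerSeries L) K PowerSeries.X)⁻¹ • X' a, h5,
      fun a => ?_⟩
    have hX : algebraMap (PowerSeries L) K PowerSeries.X ≠ 0 := by
      rw [Ne, IsFractionRing.to_map_eq_zero_iff]
      exact PowerSeries.X_ne_zero
    rw [Matrix.mul_smul, ← h6, ← Matrix.smul_mul]
    congr 1
    ext x y
    simp only [Matrix.add_apply, Matrix.map_apply, Matrix.smul_apply, smul_eq_mul, map_add, map_mul,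
      mul_add, ← IsScalarTower.algebraMap_apply]
    rw [inv_mul_cancel_left₀ hX, add_comm]
  obtain ⟨F, hF, hA, h7⟩ := HasSub.specialize _ (transc_ps L) M N' h4
  let _ : Algebra k F := ((algebraMap L F).comp (algebraMap k L)).toAlgebra
  apply HasSub.descend (L := F)
  exact h7

end PS

section Gen

open TensorProduct in
theorem exists_etale_field (R B : Type) [CommRing R] [IsDomain R] [CharZero R] [CommRing B]
    [Algebra R B] [Algebra.FiniteType R B] (hinj : Function.Injective (algebraMap R B)) :
    ∃ (L : Type) (_ : Field L) (_ : Algebra R L), Algebra.FormallyEtale R L ∧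
      Nonempty (B →ₐ[R] L) := by
  let K := FractionRing R
  let A := K ⊗[R] B
  have : Nontrivial A := Algebra.TensorProduct.nontrivial_of_algebraMap_injective_of_flat_left
    R K B hinj
  obtain ⟨m, hm⟩ := Ideal.exists_maximal A
  let L := A ⧸ m
  let _ : Field L := Ideal.Quotient.field m
  have : Algebra.FiniteType K A := inferInstance
  have : Algebra.FiniteType K L := inferInstance
  have : Module.Finite K L := finite_of_finite_type_of_isJacobsonRing K L
  have : CharZero K := IsFractionRing.charZero R
  have : Algebra.FormallyEtale K L := Algebra.FormallyEtale.of_isSeparable K L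
  have : Algebra.FormallyEtale R K := Algebra.FormallyEtale.of_isLocalization (nonZeroDivisors R)
  have : Algebra.FormallyEtale R L := Algebra.FormallyEtale.comp R K L
  exact ⟨L, inferInstance, inferInstance, this,
    ⟨(Ideal.Quotient.mkₐ R m).comp Algebra.TensorProduct.includeRight⟩⟩

theorem exists_derivation (k L σ : Type) [Field k] [Field L] [Algebra k L]
    [Algebra (MvPolynomial σ k) L] [IsScalarTower k (MvPolynomial σ k) L]
    [Algebra.FormallyEtale (MvPolynomial σ k) L] (v : σ → L) :
    ∃ D : Derivation k L L, ∀ j, D (algebraMap (MvPolynomial σ k) L (MvPolynomial.X j)) = v j := by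
  let D0 : Derivation k (MvPolynomial σ k) L := MvPolynomial.mkDerivation k v
  let l := (D0.liftKaehlerDifferential.liftBaseChange L) ∘ₗ
    (KaehlerDifferential.tensorKaehlerEquivOfFormallyEtale k (MvPolynomial σ k) L).symm.toLinearMap
  refine ⟨l.compDer (KaehlerDifferential.D k L), fun j => ?_⟩
  change l (KaehlerDifferential.D k L (algebraMap (MvPolynomial σ k) L (MvPolynomial.X j))) = v j
  simp only [l, LinearMap.comp_apply, LinearEquiv.coe_coe,
    KaehlerDifferential.tensorKaehlerEquivOfFormallyEtale_symm_D_algebraMap,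
    LinearMap.liftBaseChange_tmul, one_smul, Derivation.liftKaehlerDifferential_comp_D]
  exact MvPolynomial.mkDerivation_X k v j

theorem map_deriv_mul {k L m n p : Type} [Field k] [Field L] [Algebra k L] [Fintype n]
    (D : Derivation k L L) (A : Matrix m n L) (B : Matrix n p L) :
    (A * B).map D = A.map D * B + A * B.map D := by
  ext x y
  simp only [Matrix.map_apply, Matrix.mul_apply, Matrix.add_apply, map_sum, Derivation.leibniz,
    smul_eq_mul, ← Finset.sum_add_distrib]
  refine Finset.sum_congr rfl fun j _ => ?_
  ring

variable {Q0 Q1 : Type} [Fintype Q0] [Fintype Q1] {s t : Q1 → Q0}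
variable {ι κ : Q0 → Type} [∀ i, Fintype (ι i)]
    [∀ i, Fintype (κ i)] [∀ i, DecidableEq (κ i)]

/-- Coordinates on the representation space. -/
abbrev Coord (s t : Q1 → Q0) (ι : Q0 → Type) : Type := Σ a : Q1, ι (t a) × ι (s a)

/-- Generic matrices. -/
noncomputable def genMat (k : Type) [Field k] (s t : Q1 → Q0) (ι : Q0 → Type) (a : Q1) :
    Matrix (ι (t a)) (ι (s a)) (MvPolynomial (Coord s t ι) k) :=
  Matrix.of fun x y => MvPolynomial.X ⟨a, (x, y)⟩

/-- Generic smoothness. -/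
theorem delta_surj_of_etale {k L : Type} [Field k] [Field L]
    [Algebra (MvPolynomial (Coord s t ι) k) L]
    [Algebra.FormallyEtale (MvPolynomial (Coord s t ι) k) L]
    (P : ∀ i, Matrix (ι i) (κ i) L) (Q : ∀ i, Matrix (κ i) (ι i) L)
    (X : ∀ a, Matrix (κ (t a)) (κ (s a)) L)
    (h1 : ∀ i, Q i * P i = 1)
    (h2 : ∀ a, (genMat k s t ι a).map (algebraMap _ L) * P (s a) = P (t a) * X a) :
    Function.Surjective (delta (fun a => (genMat k s t ι a).map (algebraMap _ L)) P X) := by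
  intro C
  let _ : Algebra k L := ((algebraMap (MvPolynomial (Coord s t ι) k) L).comp
    (algebraMap k (MvPolynomial (Coord s t ι) k))).toAlgebra
  have : IsScalarTower k (MvPolynomial (Coord s t ι) k) L := IsScalarTower.of_algebraMap_eq' rfl
  obtain ⟨D, hD⟩ := exists_derivation k L (Coord s t ι)
    (fun j => -(C j.1 * Q (s j.1)) j.2.1 j.2.2)
  refine ⟨(fun i => (P i).map D, fun a => (X a).map D), ?_⟩
  funext a
  have h3 := congrArg (fun m => Matrix.map m D) (h2 a)
  simp only [map_deriv_mul] at h3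
  have h4 : ((genMat k s t ι a).map (algebraMap _ L)).map D = -(C a * Q (s a)) := by
    ext x y
    exact hD ⟨a, (x, y)⟩
  rw [h4, Matrix.neg_mul, Matrix.mul_assoc, h1, Matrix.mul_one] at h3
  simp only [delta, LinearMap.coe_mk, AddHom.coe_mk]
  have h5 : (genMat k s t ι a).map (algebraMap _ L) * (P (s a)).map D =
      C a + ((P (t a)).map D * X a + P (t a) * (X a).map D) := by
    rw [← h3]; abel
  rw [h5]; abel

theorem dichotomy (k : Type) [Field k] [CharZero k] (s t : Q1 → Q0) (ι κ : Q0 → Type)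
    [∀ i, Fintype (ι i)] [∀ i, Fintype (κ i)] [∀ i, DecidableEq (κ i)] :
    (∃ f : MvPolynomial (Coord s t ι) k, f ≠ 0 ∧
      ∀ m : ∀ a : Q1, Matrix (ι (t a)) (ι (s a)) k, HasSub κ m →
        MvPolynomial.eval (fun j : Coord s t ι => m j.1 j.2.1 j.2.2) f = 0) ∨
    (∃ (L : Type) (_ : Field L) (_ : Algebra (MvPolynomial (Coord s t ι) k) L),
      Algebra.FormallyEtale (MvPolynomial (Coord s t ι) k) L ∧
      HasSub κ (fun a => (genMat k s t ι a).map (algebraMap _ L))) := by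
  by_cases hf : ∃ f : MvPolynomial (Coord s t ι) k, f ≠ 0 ∧
      ∀ m : ∀ a : Q1, Matrix (ι (t a)) (ι (s a)) k, HasSub κ m →
        MvPolynomial.eval (fun j : Coord s t ι => m j.1 j.2.1 j.2.2) f = 0
  · exact Or.inl hf
  right
  let S := {m : ∀ a : Q1, Matrix (ι (t a)) (ι (s a)) k // HasSub κ m}
  let g : MvPolynomial (Coord s t ι) k →+* (S → k) := RingHom.pi fun m =>
    MvPolynomial.eval (fun j : Coord s t ι => m.1 j.1 j.2.1 j.2.2)
  let _ : Algebra (MvPolynomial (Coord s t ι) k) (S → k) := g.toAlgebra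
  have hg : Function.Injective (algebraMap (MvPolynomial (Coord s t ι) k) (S → k)) := by
    rw [injective_iff_map_eq_zero]
    intro f h0
    by_contra hne
    exact hf ⟨f, hne, fun m hm => congrFun h0 ⟨m, hm⟩⟩
  have hS : HasSub κ (fun a => (genMat k s t ι a).map
      (algebraMap (MvPolynomial (Coord s t ι) k) (S → k))) := by
    choose P Q X h1 h2 using fun m : S => m.2
    refine ⟨fun i => .of fun x y m => P m i x y, fun i => .of fun x y m => Q m i x y,
      fun i => .of fun x y m => X m i x y, fun i => ?_, fun a => ?_⟩
    · ext x y m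
      have := congrFun (congrFun (h1 m i) x) y
      rw [Matrix.mul_apply] at this ⊢
      rw [Finset.sum_apply]
      refine this.trans ?_
      by_cases hxy : x = y
      · subst hxy; simp
      · simp [hxy]
    · ext x y m
      have := congrFun (congrFun (h2 m a) x) y
      rw [Matrix.mul_apply, Matrix.mul_apply] at this ⊢
      rw [Finset.sum_apply, Finset.sum_apply]
      refine Eq.trans ?_ this
      refine Finset.sum_congr rfl fun j _ => ?_
      change MvPolynomial.eval (fun j : Coord s t ι => m.1 j.1 j.2.1 j.2.2)
        (MvPolynomial.X ⟨a, (x, j)⟩ : MvPolynomial (Coord s t ι) k) * _ = _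
      rw [MvPolynomial.eval_X]
      rfl
  obtain ⟨B, hB, hs⟩ := hS.exists_fg
  have hBinj : Function.Injective (algebraMap (MvPolynomial (Coord s t ι) k) B) := by
    intro x y hxy
    exact hg (congrArg Subtype.val hxy)
  obtain ⟨L, hL, hA, he, ⟨φ⟩⟩ := exists_etale_field (MvPolynomial (Coord s t ι) k) B hBinj
  refine ⟨L, hL, hA, he, ?_⟩
  have h3 := hs.map (φ : B →+* L)
  have he : (fun a => ((genMat k s t ι a).map
      (algebraMap (MvPolynomial (Coord s t ι) k) B)).map (φ : B →+* L)) =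
      fun a => (genMat k s t ι a).map (algebraMap _ L) := by
    funext a
    ext x y
    exact φ.commutes _
  rw [he] at h3
  exact h3

open scoped Kronecker in
theorem delta_surj_kron {L : Type} [Field L] (m : ℕ)
    (M : ∀ a : Q1, Matrix (ι (t a)) (ι (s a)) L)
    (P : ∀ i, Matrix (ι i) (κ i) L) (X : ∀ a, Matrix (κ (t a)) (κ (s a)) L)
    (h : Function.Surjective (delta M P X)) :
    Function.Surjective (delta (ι := fun i => Fin m × ι i) (κ := fun i => Fin m × κ i)
      (fun a => (1 : Matrix (Fin m) (Fin m) L) ⊗ₖ M a)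
      (fun i => (1 : Matrix (Fin m) (Fin m) L) ⊗ₖ P i)
      (fun a => (1 : Matrix (Fin m) (Fin m) L) ⊗ₖ X a)) := by
  intro C
  choose z hz using fun p q : Fin m => h (fun a => .of fun x y => C a (p, x) (q, y))
  refine ⟨(fun i => .of fun x y => (z x.1 y.1).1 i x.2 y.2,
    fun a => .of fun x y => (z x.1 y.1).2 a x.2 y.2), ?_⟩
  funext a
  ext ⟨p, x⟩ ⟨q, y⟩
  have := congrFun (congrFun (congrFun (hz p q) a) x) y
  simp only [delta, LinearMap.coe_mk, AddHom.coe_mk, Matrix.sub_apply, Matrix.mul_apply,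
    Matrix.of_apply, Fintype.sum_prod_type, Matrix.kroneckerMap_apply, Matrix.one_apply, ite_mul,
    mul_ite, one_mul, zero_mul, mul_zero] at this ⊢
  rw [← this]
  congr 1
  · congr 1
    · rw [Finset.sum_eq_single p]
      · simp
      · intro b _ hb; simp [hb.symm]
      · simp
    · rw [Finset.sum_eq_single q]
      · simp
      · intro b _ hb; simp [hb]
      · simp
  · rw [Finset.sum_eq_single p]
    · simp
    · intro b _ hb; simp [hb.symm]
    · simp

open scoped Kronecker in
theorem hasSub_mul_of_etale {k L : Type} [Field k] [IsAlgClosed k] [Field L]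
    [Algebra (MvPolynomial (Coord s t ι) k) L]
    [Algebra.FormallyEtale (MvPolynomial (Coord s t ι) k) L]
    (h : HasSub κ (fun a => (genMat k s t ι a).map (algebraMap _ L))) (m : ℕ)
    (N : ∀ a : Q1, Matrix (Fin m × ι (t a)) (Fin m × ι (s a)) k) :
    HasSub (ι := fun i => Fin m × ι i) (fun i => Fin m × κ i) N := by
  obtain ⟨P, Q, X, h1, h2⟩ := h
  have h3 := delta_surj_kron m _ _ _ (delta_surj_of_etale P Q X h1 h2)
  let _ : Algebra k L := ((algebraMap (MvPolynomial (Coord s t ι) k) L).comp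
    (algebraMap k (MvPolynomial (Coord s t ι) k))).toAlgebra
  refine hasSub_of_surj _ _ (fun i => (1 : Matrix (Fin m) (Fin m) L) ⊗ₖ Q i) _ ?_ ?_ h3 N
  · intro i
    rw [← Matrix.mul_kronecker_mul, h1]
    simp
  · intro a
    rw [← Matrix.mul_kronecker_mul, ← Matrix.mul_kronecker_mul, h2, Matrix.mul_one]

theorem hasSub_of_etale {k L : Type} [Field k] [IsAlgClosed k] [Field L]
    [Algebra (MvPolynomial (Coord s t ι) k) L]
    [Algebra.FormallyEtale (MvPolynomial (Coord s t ι) k) L]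
    (h : HasSub κ (fun a => (genMat k s t ι a).map (algebraMap _ L)))
    (N : ∀ a : Q1, Matrix (ι (t a)) (ι (s a)) k) : HasSub κ N := by
  obtain ⟨P, Q, X, h1, h2⟩ := h
  let _ : Algebra k L := ((algebraMap (MvPolynomial (Coord s t ι) k) L).comp
    (algebraMap k (MvPolynomial (Coord s t ι) k))).toAlgebra
  exact hasSub_of_surj _ P Q X h1 h2 (delta_surj_of_etale P Q X h1 h2) N

end Gen

section Final

variable {Q0 Q1 : Type} [Fintype Q0] [Fintype Q1]

theorem exists_eval_ne_zero {k σ : Type} [Field k] [CharZero k] [Finite σ]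
    {f : MvPolynomial σ k} (hf : f ≠ 0) : ∃ x : σ → k, MvPolynomial.eval x f ≠ 0 := by
  by_contra hcon
  push Not at hcon
  exact hf (MvPolynomial.funext fun x => by rw [hcon x, map_zero])

theorem mulGeneric {k : Type} [Field k] [IsAlgClosed k] [CharZero k] {s t : Q1 → Q0}
    {d d' : Q0 → ℕ} (h : GenericSub k s t d' d) (m : ℕ) :
    GenericSub k s t (fun i => m * d' i) (fun i => m * d i) := by
  have h1 := (genericSub_iff (ι := fun i => Fin (d i)) (κ := fun i => Fin (d' i)) d d'
    (by simp) (by simp)).1 h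
  refine (genericSub_iff (ι := fun i => Fin m × Fin (d i)) (κ := fun i => Fin m × Fin (d' i)) _ _
    (by simp) (by simp)).2 ⟨fun i => Nat.mul_le_mul_left _ (h1.1 i), ?_⟩
  rcases dichotomy k s t (fun i => Fin (d i)) (fun i => Fin (d' i)) with ⟨f, hf, hv⟩ | h2
  · obtain ⟨x, hx⟩ := exists_eval_ne_zero hf
    exact absurd (hv (fun a => Matrix.of fun p q => x ⟨a, (p, q)⟩) (h1.2 _)) hx
  · obtain ⟨L, _, _, _, h3⟩ := h2
    exact hasSub_mul_of_etale h3 m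

theorem exists_generic_rep (k : Type) [Field k] [IsAlgClosed k] [CharZero k] (s t : Q1 → Q0)
    (d : Q0 → ℕ) :
    ∃ M : QRep k s t, M.dimVec = d ∧ ∀ U, M.IsSubrep U → GenericSub k s t (M.subDim U) d := by
  classical
  have key : ∀ d' : Q0 → ℕ, ∃ f : MvPolynomial (Coord s t (fun i => Fin (d i))) k, f ≠ 0 ∧
      (d' ≤ d → ¬ GenericSub k s t d' d →
        ∀ m : ∀ a : Q1, Matrix (Fin (d (t a))) (Fin (d (s a))) k,
        HasSub (ι := fun i => Fin (d i)) (fun i => Fin (d' i)) m →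
        MvPolynomial.eval (fun j : Coord s t (fun i => Fin (d i)) => m j.1 j.2.1 j.2.2) f = 0) := by
    intro d'
    rcases dichotomy k s t (fun i => Fin (d i)) (fun i => Fin (d' i)) with ⟨f, hf, hv⟩ | h2
    · exact ⟨f, hf, fun _ _ => hv⟩
    · refine ⟨1, one_ne_zero, fun hle hn => absurd ?_ hn⟩
      obtain ⟨L, _, _, _, h3⟩ := h2
      exact (genericSub_iff (ι := fun i => Fin (d i)) (κ := fun i => Fin (d' i)) d d'
        (by simp) (by simp)).2 ⟨hle, hasSub_of_etale h3⟩
  choose f hf hv using key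
  obtain ⟨x, hx⟩ := exists_eval_ne_zero
    (Finset.prod_ne_zero_iff.2 fun d' (_ : d' ∈ Finset.Iic d) => hf d')
  rw [map_prod, Finset.prod_ne_zero_iff] at hx
  let M : QRep k s t := matToRep s t k d (fun a => Matrix.of fun p q => x ⟨a, (p, q)⟩)
  have hd : M.dimVec = d := by
    funext i
    change Module.finrank k (Fin (d i) → k) = _
    simp
  refine ⟨M, hd, fun U hU => ?_⟩
  have hle : M.subDim U ≤ d := by
    intro i
    rw [← hd]
    exact Submodule.finrank_le (U i)
  by_contra hn
  refine hx _ (Finset.mem_Iic.2 hle) (hv _ hle hn (fun a => Matrix.of fun p q => x ⟨a, (p, q)⟩) ?_)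
  have := (hasSub_iff (κ := fun i => Fin (M.subDim U i)) M
    (fun i => Pi.basisFun k (Fin (d i)))).1 ⟨U, hU, fun i => (Fintype.card_fin _).symm⟩
  convert this using 2 with a
  exact (LinearMap.toMatrix'_toLin' _).symm

theorem euler_add (s t : Q1 → Q0) (x y z : Q0 → ℤ) :
    euler s t (fun i => x i + y i) z = euler s t x z + euler s t y z := by
  simp only [euler, add_mul, Finset.sum_add_distrib]
  ring

theorem euler_mul_left (s t : Q1 → Q0) (c : ℤ) (x z : Q0 → ℤ) :
    euler s t (fun i => c * x i) z = c * euler s t x z := by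
  simp only [euler, mul_assoc, ← Finset.mul_sum]
  ring

theorem euler_mul_right (s t : Q1 → Q0) (c : ℤ) (x z : Q0 → ℤ) :
    euler s t x (fun i => c * z i) = c * euler s t x z := by
  simp only [euler, mul_left_comm, ← Finset.mul_sum]
  ring

theorem finrank_split {k V W : Type} [Field k] [AddCommGroup V] [Module k V] [AddCommGroup W]
    [Module k W] [FiniteDimensional k V] [FiniteDimensional k W] (U : Submodule k (V × W)) :
    Module.finrank k U = Module.finrank k (U.comap (LinearMap.inl k V W)) +
      Module.finrank k (U.map (LinearMap.snd k V W)) := by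
  have h1 := ((LinearMap.snd k V W).domRestrict U).finrank_range_add_finrank_ker
  have h2 : LinearMap.range ((LinearMap.snd k V W).domRestrict U) =
      U.map (LinearMap.snd k V W) := by
    rw [LinearMap.range_domRestrict]
  have e : (U.comap (LinearMap.inl k V W)) ≃ₗ[k]
      LinearMap.ker ((LinearMap.snd k V W).domRestrict U) :=
    { toFun := fun v => ⟨⟨(v.1, 0), v.2⟩, rfl⟩
      map_add' := fun v w => by ext <;> simp
      map_smul' := fun c w => by ext <;> simp
      invFun := fun u => ⟨u.1.1.1, by
        have h : u.1.1.2 = 0 := u.2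
        have h' := u.1.2
        rw [Submodule.mem_comap, LinearMap.inl_apply, ← h]
        exact h'⟩
      left_inv := fun v => rfl
      right_inv := fun u => by
        have h : u.1.1.2 = 0 := u.2
        ext
        · rfl
        · exact h.symm }
  rw [h2] at h1
  rw [e.finrank_eq, ← h1, add_comm]

theorem exists_pow_rep {k : Type} [Field k] {s t : Q1 → Q0} (M : QRep k s t) (e : Q0 → ℤ) (c : ℤ)
    (hM : ∀ U, M.IsSubrep U → -euler s t (fun i => (M.subDim U i : ℤ)) e ≤ c) (m : ℕ) :
    ∃ N : QRep k s t, N.dimVec = (fun i => m * M.dimVec i) ∧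
      ∀ U, N.IsSubrep U → -euler s t (fun i => (N.subDim U i : ℤ)) e ≤ m * c := by
  induction m with
  | zero =>
    let N : QRep k s t := { V := fun _ => PUnit, hom := fun _ => 0 }
    refine ⟨N, ?_, fun U _ => ?_⟩
    · funext i
      rw [Nat.zero_mul]
      exact Module.finrank_zero_of_subsingleton (R := k) (M := PUnit)
    · have h0 : ∀ i, N.subDim U i = 0 := fun i => by
        have h1 : N.subDim U i ≤ Module.finrank k PUnit := Submodule.finrank_le (U i)
        rw [Module.finrank_zero_of_subsingleton] at h1
        exact Nat.le_zero.1 h1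
      simp [h0, euler]
  | succ m ih =>
    obtain ⟨N, hN, hb⟩ := ih
    refine ⟨M.dsum N, ?_, fun U hU => ?_⟩
    · funext i
      have h1 : (M.dsum N).dimVec i = M.dimVec i + N.dimVec i :=
        Module.finrank_prod (R := k) (M := M.V i) (M' := N.V i)
      rw [h1, hN]; ring
    · let U1 : ∀ i, Submodule k (M.V i) := fun i =>
        Submodule.comap (LinearMap.inl k (M.V i) (N.V i)) (U i)
      let U2 : ∀ i, Submodule k (N.V i) := fun i =>
        Submodule.map (LinearMap.snd k (M.V i) (N.V i)) (U i)
      have hU1 : M.IsSubrep U1 := by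
        intro a x hx
        have h1 := hU a (x, 0) hx
        have h2 : (M.dsum N).hom a (x, 0) = (M.hom a x, 0) := by
          change (M.hom a x, N.hom a 0) = _
          rw [map_zero]
        rw [h2] at h1
        exact h1
      have hU2 : N.IsSubrep U2 := by
        rintro a _ ⟨x, hx, rfl⟩
        exact ⟨_, hU a x hx, rfl⟩
      have hs : ∀ i, (M.dsum N).subDim U i = M.subDim U1 i + N.subDim U2 i := fun i =>
        finrank_split (V := M.V i) (W := N.V i) (U i)
      have h1 := hM U1 hU1
      have h2 := hb U2 hU2
      simp only [hs, Nat.cast_add]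
      rw [euler_add]
      push_cast
      linarith

section Ext
variable (k : Type) [Field k] (s t : Q1 → Q0) (d e : Q0 → ℕ)

theorem ext_bdd : BddAbove {z : ℤ | ∃ d' : Q0 → ℕ, GenericSub k s t d' d ∧
    z = -(euler s t (fun i => (d' i : ℤ)) (fun i => (e i : ℤ)))} := by
  classical
  refine Set.Finite.bddAbove (((Finset.Iic d).finite_toSet.image
    (fun d' : Q0 → ℕ => -(euler s t (fun i => (d' i : ℤ)) (fun i => (e i : ℤ))))).subset ?_)
  rintro z ⟨d', h, rfl⟩
  exact ⟨d', Finset.mem_coe.2 (Finset.mem_Iic.2 h.1), rfl⟩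

theorem genericSub_zero : GenericSub k s t 0 d := by
  refine ⟨fun i => Nat.zero_le _, fun M _ => ⟨fun _ => ⊥, fun a x hx => ?_, ?_⟩⟩
  · rw [Submodule.mem_bot] at hx ⊢
    rw [hx, map_zero]
  · funext i
    exact finrank_bot k (M.V i)

theorem ext_attained : ∃ d' : Q0 → ℕ, GenericSub k s t d' d ∧
    extGen k s t d e = -(euler s t (fun i => (d' i : ℤ)) (fun i => (e i : ℤ))) :=
  Int.csSup_mem (s := {z : ℤ | ∃ d' : Q0 → ℕ, GenericSub k s t d' d ∧
    z = -(euler s t (fun i => (d' i : ℤ)) (fun i => (e i : ℤ)))})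
    ⟨_, 0, genericSub_zero k s t d, rfl⟩ (ext_bdd k s t d e)

variable {k s t d}

theorem le_ext {d' : Q0 → ℕ} (h : GenericSub k s t d' d) :
    -(euler s t (fun i => (d' i : ℤ)) (fun i => (e i : ℤ))) ≤ extGen k s t d e :=
  le_csSup (ext_bdd k s t d e) ⟨d', h, rfl⟩

end Ext

end Final

/-- `k·ext(d, e) = ext(d, k·e) = ext(k·d, e)` for positive integers `k`. -/
theorem stmt7 (k : Type) [Field k] [IsAlgClosed k] [CharZero k]
    {Q0 Q1 : Type} [Fintype Q0] [Fintype Q1] (s t : Q1 → Q0) (d e : Q0 → ℕ)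
    (m : ℕ) (hm : 0 < m) :
    (m : ℤ) * extGen k s t d e = extGen k s t d (fun i => m * e i) ∧
      extGen k s t d (fun i => m * e i) = extGen k s t (fun i => m * d i) e := by
  have hpos : (0 : ℤ) ≤ m := by positivity
  have hr : ∀ x : Q0 → ℤ, euler s t x (fun i => ((m * e i : ℕ) : ℤ)) =
      m * euler s t x (fun i => (e i : ℤ)) := fun x => by
    simp only [Nat.cast_mul]
    exact euler_mul_right s t m x _
  have hl : ∀ x : Q0 → ℕ, euler s t (fun i => ((m * x i : ℕ) : ℤ)) (fun i => (e i : ℤ)) =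
      m * euler s t (fun i => (x i : ℤ)) (fun i => (e i : ℤ)) := fun x => by
    simp only [Nat.cast_mul]
    exact euler_mul_left s t m _ _
  have h1 : (m : ℤ) * extGen k s t d e = extGen k s t d (fun i => m * e i) := by
    apply le_antisymm
    · obtain ⟨d', hd, he⟩ := ext_attained k s t d e
      have := le_ext (fun i => m * e i) hd
      rw [hr] at this
      rw [he]
      linarith
    · obtain ⟨d', hd, he⟩ := ext_attained k s t d (fun i => m * e i)
      have := mul_le_mul_of_nonneg_left (le_ext e hd) hpos
      rw [he, hr]
      linarith
  refine ⟨h1, ?_⟩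
  rw [← h1]
  apply le_antisymm
  · obtain ⟨d', hd, he⟩ := ext_attained k s t d e
    have := le_ext e (mulGeneric hd m)
    rw [hl] at this
    rw [he]
    linarith
  · obtain ⟨d', hd, he⟩ := ext_attained k s t (fun i => m * d i) e
    obtain ⟨M, hM, hgen⟩ := exists_generic_rep k s t d
    obtain ⟨N, hN, hb⟩ := exists_pow_rep M (fun i => (e i : ℤ)) (extGen k s t d e)
      (fun U hU => le_ext e (hgen U hU)) m
    obtain ⟨U, hU, hUd⟩ := hd.2 N (by rw [hN, hM])
    have := hb U hU
    rw [hUd] at this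
    rw [he]
    exact this
end
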